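/- Let S be a numerical semigroup with multiplicity three and let I ∈ 𝔑(S) \ {S}. Then either I is +-irreducible, or there exist two +-irreducible ideals J, K ∈ 𝔑(S) such that I = J ∨ K, where ∨ denotes the supremum with respect to ⪯. -/

import Mathlib

open Pointwise

/-- A numerical semigroup: an additive submonoid of `ℕ` with finite complement. -/
def IsNumericalSemigroup (S : Set ℕ) : Prop :=
  0 ∈ S ∧ (∀ a ∈ S, ∀ b ∈ S, a + b ∈ S) ∧ Sᶜ.Finite

/-- A normalized (relative) ideal of `S`: a subset of `ℕ` with `min I = 0`
(equivalently `0 ∈ I`) satisfying `I + S ⊆ I`. -/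
def IsNormalizedIdeal (S I : Set ℕ) : Prop :=
  0 ∈ I ∧ ∀ i ∈ I, ∀ s ∈ S, i + s ∈ I

/-- The set `𝔑(S)` of normalized ideals of `S`. -/
def NI (S : Set ℕ) : Set (Set ℕ) := {I : Set ℕ | IsNormalizedIdeal S I}

/-- The multiplicity of `S`: its least nonzero element. -/
noncomputable def multNS (S : Set ℕ) : ℕ := sInf {n : ℕ | n ∈ S ∧ n ≠ 0}

/-- The Frobenius number of `S` (or of an ideal): the largest natural number not in `S`. -/
noncomputable def frobNS (S : Set ℕ) : ℕ := sSup Sᶜ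

/-- A minimal generator of `S`: a nonzero element of `S` that is not the sum
of two nonzero elements of `S`. -/
def IsMinimalGenerator (S : Set ℕ) (a : ℕ) : Prop :=
  a ∈ S ∧ a ≠ 0 ∧ ¬ ∃ b ∈ S, ∃ c ∈ S, b ≠ 0 ∧ c ≠ 0 ∧ a = b + c

/-- A minimal generator of an ideal `I` of a numerical semigroup `T`:
an element `x ∈ I` with `x ≠ y + t` for every `y ∈ I` and nonzero `t ∈ T`. -/
def IsMinGenOfIdeal (T I : Set ℕ) (x : ℕ) : Prop :=
  x ∈ I ∧ ∀ y ∈ I, ∀ t ∈ T, t ≠ 0 → x ≠ y + t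

/-- The order `⪯` on normalized ideals: `I ⪯ J` iff `I + K = J` for some `K ∈ 𝔑(S)`. -/
def Preceq (S I J : Set ℕ) : Prop :=
  ∃ K : Set ℕ, IsNormalizedIdeal S K ∧ I + K = J

/-- `M` is the supremum of `{I, J}` in `(𝔑(S), ⪯)`. -/
def IsSupNI (S I J M : Set ℕ) : Prop :=
  IsNormalizedIdeal S M ∧ Preceq S I M ∧ Preceq S J M ∧
    ∀ L : Set ℕ, IsNormalizedIdeal S L → Preceq S I L → Preceq S J L → Preceq S M L

/-- `M` is the infimum of `{I, J}` in `(𝔑(S), ⪯)`. -/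
def IsInfNI (S I J M : Set ℕ) : Prop :=
  IsNormalizedIdeal S M ∧ Preceq S M I ∧ Preceq S M J ∧
    ∀ L : Set ℕ, IsNormalizedIdeal S L → Preceq S L I → Preceq S L J → Preceq S L M

/-- `(𝔑(S), ⪯)` is a lattice: every pair of normalized ideals has a supremum
and an infimum with respect to `⪯`. -/
def NILattice (S : Set ℕ) : Prop :=
  ∀ I J : Set ℕ, IsNormalizedIdeal S I → IsNormalizedIdeal S J →
    (∃ M : Set ℕ, IsSupNI S I J M) ∧ (∃ M : Set ℕ, IsInfNI S I J M)

/-- The ordinary numerical semigroup `H_m = {0} ∪ {n : n ≥ m}`. -/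
def ordinaryNS (m : ℕ) : Set ℕ := {0} ∪ {n : ℕ | m ≤ n}

/-- `I ∈ 𝔑(S) \ {S}` is `+`-irreducible if `I = J + K` with `J, K ∈ 𝔑(S)`
implies `I = J` or `I = K`. -/
def PlusIrreducible (S I : Set ℕ) : Prop :=
  IsNormalizedIdeal S I ∧ I ≠ S ∧
    ∀ J K : Set ℕ, IsNormalizedIdeal S J → IsNormalizedIdeal S K → I = J + K → I = J ∨ I = K

/-!
Write `⟨0, g⟩` for the ideal `S ∪ (g + S)`. Its elements outside `S` are at least `g`, so when
`g ∉ S` any decomposition of `g` inside it has `g` itself as a summand, and `⟨0, g⟩` is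
`+`-irreducible. Since `3 ∈ S`, the elements of an ideal `I` in a fixed residue class modulo `3` are
the `g + 3n`, where `g` is the least of them. If `I` leaves `S` in only one of the two nonzero
classes, then `I = ⟨0, g⟩`. If it does so in both, with least elements `g` and `g'`, then
`g + g' ∈ S` gives `I = ⟨0, g⟩ ∪ ⟨0, g'⟩ = ⟨0, g⟩ + ⟨0, g'⟩`, an upper bound of both. It is the
least one: if `L` is another, then `I + (L - I) = L` can be checked one residue class at a time, and
on the class of `g` (resp. `g'`) it follows from `⟨0, g⟩ ⪯ L` (resp. `⟨0, g'⟩ ⪯ L`).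
-/

/-- The quotient `L - I`, i.e. the largest `K ⊆ ℕ` with `I + K ⊆ L`. It is the canonical candidate
for a witness of `I ⪯ L`. -/
def idealQuotient (L I : Set ℕ) : Set ℕ := {k | ∀ i ∈ I, k + i ∈ L}

/-- The normalized ideal `{0, g} + S` generated by `0` and `g`. -/
def pairIdeal (S : AddSubmonoid ℕ) (g : ℕ) : Set ℕ := {0, g} + S

/-- The submonoid of `ℕ` underlying a numerical semigroup. -/
def IsNumericalSemigroup.toAddSubmonoid {S : Set ℕ} (hS : IsNumericalSemigroup S) :
    AddSubmonoid ℕ where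
  carrier := S
  zero_mem' := hS.1
  add_mem' ha hb := hS.2.1 _ ha _ hb

lemma multNS_mem {S : Set ℕ} (h : multNS S ≠ 0) : multNS S ∈ S :=
  (Nat.sInf_mem (Nat.nonempty_of_pos_sInf (Nat.pos_of_ne_zero h))).1

section Ideals

variable {S I J K L : Set ℕ}

lemma IsNormalizedIdeal.semigroup_subset (hI : IsNormalizedIdeal S I) : S ⊆ I :=
  fun s hs => zero_add s ▸ hI.2 0 hI.1 s hs

lemma IsNormalizedIdeal.add (hJ : IsNormalizedIdeal S J) (hK : IsNormalizedIdeal S K) :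
    IsNormalizedIdeal S (J + K) := by
  refine ⟨Set.add_mem_add hJ.1 hK.1, ?_⟩
  rintro _ ⟨j, hj, k, hk, rfl⟩ s hs
  exact ⟨j, hj, k + s, hK.2 k hk s hs, (add_assoc j k s).symm⟩

lemma isNormalizedIdeal_idealQuotient (hI : IsNormalizedIdeal S I) (hIL : I ⊆ L) :
    IsNormalizedIdeal S (idealQuotient L I) := by
  refine ⟨fun i hi => (zero_add i).symm ▸ hIL hi, fun k hk s hs i hi => ?_⟩
  rw [add_assoc, add_comm s i]
  exact hk _ (hI.2 i hi s hs)

lemma add_idealQuotient_subset : I + idealQuotient L I ⊆ L := by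
  rintro _ ⟨i, hi, k, hk, rfl⟩
  simpa only [add_comm k i] using hk i hi

lemma preceq_of_subset_add_idealQuotient (hI : IsNormalizedIdeal S I) (hIL : I ⊆ L)
    (hL : L ⊆ I + idealQuotient L I) : Preceq S I L :=
  ⟨idealQuotient L I, isNormalizedIdeal_idealQuotient hI hIL, add_idealQuotient_subset.antisymm hL⟩

lemma Preceq.subset (h : Preceq S J L) : J ⊆ L := by
  obtain ⟨K, hK, rfl⟩ := h
  exact Set.subset_add_left J hK.1

end Ideals

section Submonoid

variable {S : AddSubmonoid ℕ} {I : Set ℕ} {g g' i m x y : ℕ}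

lemma isNormalizedIdeal_self (S : AddSubmonoid ℕ) : IsNormalizedIdeal S (S : Set ℕ) :=
  ⟨S.zero_mem, fun _ ha _ hb => S.add_mem ha hb⟩

lemma IsNormalizedIdeal.mem_of_le_of_mod_eq (hI : IsNormalizedIdeal S I) (hm : m ∈ S)
    (hx : x ∈ I) (hxy : x ≤ y) (hmod : x % m = y % m) : y ∈ I := by
  obtain ⟨n, hn⟩ : m ∣ y - x := (Nat.modEq_iff_dvd' hxy).1 hmod
  have hyx : x + n • m = y := by rw [smul_eq_mul, mul_comm, ← hn, Nat.add_sub_cancel' hxy]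
  exact hyx ▸ hI.2 x hx _ (S.nsmul_mem hm n)

lemma mem_pairIdeal : x ∈ pairIdeal S g ↔ x ∈ S ∨ ∃ s ∈ S, g + s = x := by
  simp [pairIdeal, Set.mem_add]

lemma gen_mem_pairIdeal : g ∈ pairIdeal S g :=
  mem_pairIdeal.2 (.inr ⟨0, S.zero_mem, add_zero g⟩)

lemma isNormalizedIdeal_pairIdeal (S : AddSubmonoid ℕ) (g : ℕ) :
    IsNormalizedIdeal S (pairIdeal S g) := by
  refine ⟨mem_pairIdeal.2 (.inl S.zero_mem), ?_⟩
  rintro _ ⟨a, ha, t, ht, rfl⟩ s hs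
  exact ⟨a, ha, t + s, S.add_mem ht hs, (add_assoc a t s).symm⟩

lemma pairIdeal_subset_iff (hI : IsNormalizedIdeal S I) : pairIdeal S g ⊆ I ↔ g ∈ I := by
  refine ⟨fun h => h gen_mem_pairIdeal, fun hg x hx => ?_⟩
  obtain hxS | ⟨s, hs, rfl⟩ := mem_pairIdeal.1 hx
  · exact hI.semigroup_subset hxS
  · exact hI.2 g hg s hs

lemma mem_or_le_of_mem_pairIdeal (hx : x ∈ pairIdeal S g) : x ∈ S ∨ g ≤ x :=
  (mem_pairIdeal.1 hx).imp_right fun ⟨s, _, hs⟩ => hs ▸ Nat.le_add_right g s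

lemma plusIrreducible_pairIdeal (hg : g ∉ S) : PlusIrreducible S (pairIdeal S g) := by
  refine ⟨isNormalizedIdeal_pairIdeal S g, fun h => hg ?_, fun J K hJ hK h => ?_⟩
  · exact (Set.ext_iff.1 h g).1 gen_mem_pairIdeal
  have hJsub : J ⊆ pairIdeal S g := h ▸ Set.subset_add_left J hK.1
  have hKsub : K ⊆ pairIdeal S g := h ▸ Set.subset_add_right K hJ.1
  obtain ⟨j, hj, k, hk, hjk : j + k = g⟩ : g ∈ J + K := h ▸ gen_mem_pairIdeal
  suffices g ∈ J ∨ g ∈ K from this.imp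
    (fun hgJ => ((pairIdeal_subset_iff hJ).2 hgJ).antisymm hJsub)
    (fun hgK => ((pairIdeal_subset_iff hK).2 hgK).antisymm hKsub)
  obtain hjS | hgj := mem_or_le_of_mem_pairIdeal (hJsub hj)
  · obtain hkS | hgk := mem_or_le_of_mem_pairIdeal (hKsub hk)
    · exact absurd (hjk ▸ S.add_mem hjS hkS) hg
    · exact .inr ((by lia : k = g) ▸ hk)
  · exact .inl ((by lia : j = g) ▸ hj)

lemma pairIdeal_add_pairIdeal (h : g + g' ∈ S) :
    pairIdeal S g + pairIdeal S g' = pairIdeal S g ∪ pairIdeal S g' := by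
  have hJ := isNormalizedIdeal_pairIdeal S g
  have hK := isNormalizedIdeal_pairIdeal S g'
  refine Set.Subset.antisymm ?_
    (Set.union_subset (Set.subset_add_left _ hK.1) (Set.subset_add_right _ hJ.1))
  rintro _ ⟨x, hx, y, hy, rfl⟩
  obtain hxS | ⟨s, hs, rfl⟩ := mem_pairIdeal.1 hx
  · exact .inr (by simpa only [add_comm y x] using hK.2 y hy x hxS)
  obtain hyS | ⟨t, ht, rfl⟩ := mem_pairIdeal.1 hy
  · exact .inl (hJ.2 _ hx y hyS)
  · have hsum : g + s + (g' + t) ∈ S := add_add_add_comm g g' s t ▸ S.add_mem h (S.add_mem hs ht)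
    exact .inl (hJ.semigroup_subset hsum)

lemma exists_residue_generator (hm : m ∈ S) (hi : i ∈ I) (hiS : i ∉ S) :
    ∃ g ∈ I, g ∉ S ∧ g % m = i % m ∧ ∀ j ∈ I, j % m = g % m → j ∈ pairIdeal S g := by
  let C : Set ℕ := {j | j ∈ I ∧ j % m = i % m}
  obtain ⟨hgI, hgi⟩ : sInf C ∈ C := Nat.sInf_mem ⟨i, hi, rfl⟩
  have hmin {j : ℕ} (hj : j ∈ I) (hji : j % m = i % m) : sInf C ≤ j := Nat.sInf_le ⟨hj, hji⟩
  refine ⟨sInf C, hgI, fun hgS => hiS ?_, hgi, fun j hj hjg => ?_⟩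
  · exact (isNormalizedIdeal_self S).mem_of_le_of_mod_eq hm hgS (hmin hi rfl) hgi
  · exact (isNormalizedIdeal_pairIdeal S _).mem_of_le_of_mod_eq hm gen_mem_pairIdeal
      (hmin hj (hjg.trans hgi)) hjg.symm

end Submonoid

section ThreeMem

variable {S : AddSubmonoid ℕ} {I J K L : Set ℕ} {g g' l n r : ℕ}

lemma IsNormalizedIdeal.mem_of_mod_three_eq_zero (hI : IsNormalizedIdeal S I) (h3 : 3 ∈ S)
    (hn : n % 3 = 0) : n ∈ I :=
  hI.mem_of_le_of_mod_eq h3 hI.1 n.zero_le hn.symm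

-- Write `l = j + u` with `j ∈ J` and `J + U = L`. Modulo `3`: if `u ≡ 0`, then `l ∈ J` and
-- `l = l + 0` works; if `j ≡ 0`, then `l = j + u` works; otherwise `j ≡ u ≡ 2 l`, and
-- `l = 0 + l` works.
lemma mem_add_idealQuotient_of_preceq (h3 : 3 ∈ S) (hI : IsNormalizedIdeal S I)
    (hJ : IsNormalizedIdeal S J) (hJI : J ⊆ I) (hIL : I ⊆ L) (hJL : Preceq S J L) (hl : l ∈ L)
    (hl0 : l % 3 ≠ 0) (hIJ : ∀ i ∈ I, i % 3 = l % 3 → i ∈ J) : l ∈ I + idealQuotient L I := by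
  obtain ⟨U, hU, rfl⟩ := hJL
  obtain ⟨j, hj, u, hu, hju : j + u = l⟩ := hl
  have hL := hJ.add hU
  have huL : u ∈ J + U := Set.subset_add_right U hJ.1 hu
  by_cases hu0 : u % 3 = 0
  · have hlJ : l ∈ J := hJ.mem_of_le_of_mod_eq h3 hj (by lia) (by lia)
    exact ⟨l, hJI hlJ, 0, (isNormalizedIdeal_idealQuotient hI hIL).1, add_zero l⟩
  by_cases hj0 : j % 3 = 0
  · refine ⟨j, hJI hj, u, fun i hi => ?_, hju⟩
    obtain hi0 | hil | hil : i % 3 = 0 ∨ i % 3 = l % 3 ∨ (l + i) % 3 = 0 := by lia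
    · exact hL.mem_of_le_of_mod_eq h3 huL (by lia) (by lia)
    · exact ⟨i, hIJ i hi hil, u, hu, add_comm i u⟩
    · exact hL.mem_of_mod_three_eq_zero h3 (by lia)
  · refine ⟨0, hI.1, l, fun i _ => ?_, zero_add l⟩
    obtain hi0 | hil | hil : i % 3 = 0 ∨ i % 3 = l % 3 ∨ (l + i) % 3 = 0 := by lia
    · exact hL.mem_of_le_of_mod_eq h3 ⟨j, hj, u, hu, hju⟩ (by lia) (by lia)
    · exact hL.mem_of_le_of_mod_eq h3 huL (by lia) (by lia)
    · exact hL.mem_of_mod_three_eq_zero h3 hil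

lemma isSupNI_add_of_residues (h3 : 3 ∈ S) (hJ : IsNormalizedIdeal S J)
    (hK : IsNormalizedIdeal S K) (hr : r % 3 ≠ 0) (hJr : ∀ i ∈ J + K, i % 3 = r % 3 → i ∈ J)
    (hKr : ∀ i ∈ J + K, (i + r) % 3 = 0 → i ∈ K) : IsSupNI S J K (J + K) := by
  have hJK := hJ.add hK
  refine ⟨hJK, ⟨K, hK, rfl⟩, ⟨J, hJ, add_comm K J⟩, fun L hL hJL hKL => ?_⟩
  have residue_cases (n : ℕ) : n % 3 = 0 ∨ n % 3 = r % 3 ∨ (n + r) % 3 = 0 := by lia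
  have hsub : J + K ⊆ L := fun i hi => by
    obtain h0 | h1 | h2 := residue_cases i
    · exact hL.mem_of_mod_three_eq_zero h3 h0
    · exact hJL.subset (hJr i hi h1)
    · exact hKL.subset (hKr i hi h2)
  refine preceq_of_subset_add_idealQuotient hJK hsub fun l hl => ?_
  obtain h0 | h1 | h2 := residue_cases l
  · exact ⟨l, hJK.mem_of_mod_three_eq_zero h3 h0, 0,
      (isNormalizedIdeal_idealQuotient hJK hsub).1, add_zero l⟩
  · exact mem_add_idealQuotient_of_preceq h3 hJK hJ (Set.subset_add_left J hK.1) hsub hJL hl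
      (by lia) fun i hi hil => hJr i hi (by lia)
  · exact mem_add_idealQuotient_of_preceq h3 hJK hK (Set.subset_add_right K hJ.1) hsub hKL hl
      (by lia) fun i hi hil => hKr i hi (by lia)

lemma eq_pairIdeal_add_pairIdeal (h3 : 3 ∈ S) (hI : IsNormalizedIdeal S I) (hgI : g ∈ I)
    (hgI' : g' ∈ I) (hg0 : g % 3 ≠ 0) (hgg' : (g + g') % 3 = 0)
    (hg : ∀ i ∈ I, i % 3 = g % 3 → i ∈ pairIdeal S g)
    (hg' : ∀ i ∈ I, i % 3 = g' % 3 → i ∈ pairIdeal S g') :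
    I = pairIdeal S g + pairIdeal S g' := by
  have hsum : g + g' ∈ S := (isNormalizedIdeal_self S).mem_of_mod_three_eq_zero h3 hgg'
  rw [pairIdeal_add_pairIdeal hsum]
  refine Set.Subset.antisymm (fun i hi => ?_) (Set.union_subset
    ((pairIdeal_subset_iff hI).2 hgI) ((pairIdeal_subset_iff hI).2 hgI'))
  obtain h0 | h1 | h2 : i % 3 = 0 ∨ i % 3 = g % 3 ∨ i % 3 = g' % 3 := by lia
  · exact .inl ((isNormalizedIdeal_pairIdeal S g).mem_of_mod_three_eq_zero h3 h0)
  · exact .inl (hg i hi h1)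
  · exact .inr (hg' i hi h2)

end ThreeMem

theorem plusIrred_or_sup_of_plusIrred_general (S : AddSubmonoid ℕ) (h3 : 3 ∈ S) (I : Set ℕ)
    (hI : IsNormalizedIdeal S I) (hne : I ≠ S) :
    PlusIrreducible S I ∨
      ∃ J K : Set ℕ, PlusIrreducible S J ∧ PlusIrreducible S K ∧ IsSupNI S J K I := by
  obtain ⟨i, hi, hiS⟩ : ∃ i ∈ I, i ∉ S :=
    Set.not_subset.1 fun h => hne (h.antisymm hI.semigroup_subset)
  obtain ⟨g, hgI, hgS, -, hg⟩ := exists_residue_generator h3 hi hiS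
  by_cases hsub : I ⊆ pairIdeal S g
  · exact .inl (hsub.antisymm ((pairIdeal_subset_iff hI).2 hgI) ▸ plusIrreducible_pairIdeal hgS)
  obtain ⟨i', hi', hi'g⟩ := Set.not_subset.1 hsub
  have hi'S : i' ∉ S := fun h => hi'g (mem_pairIdeal.2 (.inl h))
  obtain ⟨g', hgI', hgS', hgi', hg'⟩ := exists_residue_generator h3 hi' hi'S
  have mod_three_ne_zero {n : ℕ} (hn : n ∉ S) : n % 3 ≠ 0 :=
    mt ((isNormalizedIdeal_self S).mem_of_mod_three_eq_zero h3) hn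
  have hg0 : g % 3 ≠ 0 := mod_three_ne_zero hgS
  have hg0' : g' % 3 ≠ 0 := mod_three_ne_zero hgS'
  have hne_mod : g' % 3 ≠ g % 3 := fun h => hi'g (hg i' hi' (hgi'.symm.trans h))
  obtain rfl := eq_pairIdeal_add_pairIdeal h3 hI hgI hgI' hg0 (by lia) hg hg'
  exact .inr ⟨_, _, plusIrreducible_pairIdeal hgS, plusIrreducible_pairIdeal hgS',
    isSupNI_add_of_residues h3 (isNormalizedIdeal_pairIdeal S g) (isNormalizedIdeal_pairIdeal S g')
      hg0 hg fun i hi h => hg' i hi (by lia)⟩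

/-- Corollary: for `S` of multiplicity three, every
`I ∈ 𝔑(S) \ {S}` is either `+`-irreducible or the supremum (w.r.t. `⪯`) of two
`+`-irreducible ideals. -/
theorem plusIrred_or_sup_of_plusIrred (S : Set ℕ) (hS : IsNumericalSemigroup S)
    (hm : multNS S = 3) (I : Set ℕ) (hI : IsNormalizedIdeal S I) (hne : I ≠ S) :
    PlusIrreducible S I ∨
      ∃ J K : Set ℕ, PlusIrreducible S J ∧ PlusIrreducible S K ∧ IsSupNI S J K I :=
  plusIrred_or_sup_of_plusIrred_general hS.toAddSubmonoid
    (hm ▸ multNS_mem (by simp [hm]) : 3 ∈ S) I hI hne
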